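/- The trace of K*K decomposes as follows: (1/π²) ∫₀^L ∫₀^L k(s,t)² dt ds = 1 + (1/π²) ∫₀^L ∫₀^L (k(s,t) + π/L)² dt ds. -/

import Mathlib

open Real Filter Topology MeasureTheory intervalIntegral

/-- The two-dimensional double layer kernel
`k(s,t) = ⟨q(s) − q(t), n(t)⟩ / ‖q(s) − q(t)‖²` with outward unit normal
`n(t) = (q'(t)₂, −q'(t)₁)`, written out in coordinates. -/
noncomputable def dlKernel (q : ℝ → EuclideanSpace ℝ (Fin 2)) (s t : ℝ) : ℝ :=
  ((q s 0 - q t 0) * deriv q t 1 - (q s 1 - q t 1) * deriv q t 0) / ‖q s - q t‖ ^ 2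

/-- The diagonal value `(1/2)·⟨q''(t), n(t)⟩ = −κ(t)/2` of the continuously
extended double layer kernel. -/
noncomputable def dlDiag (q : ℝ → EuclideanSpace ℝ (Fin 2)) (t : ℝ) : ℝ :=
  (1 / 2) * (deriv (deriv q) t 0 * deriv q t 1 - deriv (deriv q) t 1 * deriv q t 0)

/-!
For fixed `h`, the sum `k(s, s + h) + k(s + h, s)` is minus the rate of rotation of the chord from
`q(s)` to `q(s + h)` as `s` varies. The chord closes up after one period and does not vanish for
`0 < h < L`, so the integral of this sum over a period lies in `2πℤ`. It is continuous in `h`, hence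
constant on `[0, L]`, and letting `h → 0` identifies it with twice the integral of `k` over the
diagonal. Integrating over `h` gives `∬ k = L ∫ k(t, t) dt = -π L`, and expanding the square
`(k + π / L)²` yields the decomposition.
-/

section RealAnalysis

theorem exp_integral_logDeriv {z : ℝ → ℂ} (hz : ContDiff ℝ 1 z) (hz₀ : ∀ t, z t ≠ 0) (a b : ℝ) :
    Complex.exp (∫ t in a..b, logDeriv z t) = z b / z a := by
  have hlog : Continuous (logDeriv z) := hz.continuous_deriv_one.div hz.continuous hz₀
  have hE : ∀ u, HasDerivAt (fun u ↦ Complex.exp (-∫ t in a..u, logDeriv z t) * z u) 0 u := by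
    intro u
    refine ((hlog.integral_hasStrictDerivAt a u).hasDerivAt.fun_neg.cexp.fun_mul
      (hz.differentiable_one u).hasDerivAt).congr_deriv ?_
    rw [logDeriv_apply]
    field_simp [hz₀ u]
    ring
  have hconst := is_const_of_deriv_eq_zero (fun u ↦ (hE u).differentiableAt)
    (fun u ↦ (hE u).deriv) b a
  rw [integral_same, neg_zero, Complex.exp_zero, one_mul, Complex.exp_neg] at hconst
  rw [← hconst]
  field_simp [hz₀ b, Complex.exp_ne_zero]

theorem integral_im_logDeriv_mem_zmultiples {z : ℝ → ℂ} (hz : ContDiff ℝ 1 z)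
    (hz₀ : ∀ t, z t ≠ 0) {a b : ℝ} (hab : z b = z a) :
    ∫ t in a..b, (logDeriv z t).im ∈ AddSubgroup.zmultiples (2 * π) := by
  have hlog : Continuous (logDeriv z) := hz.continuous_deriv_one.div hz.continuous hz₀
  have hexp : Complex.exp (∫ t in a..b, logDeriv z t) = 1 := by
    rw [exp_integral_logDeriv hz hz₀, hab, div_self (hz₀ a)]
  obtain ⟨n, hn⟩ := Complex.exp_eq_one_iff.1 hexp
  have him : ∫ t in a..b, (logDeriv z t).im = (∫ t in a..b, logDeriv z t).im :=
    Complex.imCLM.intervalIntegral_comp_comm (hlog.intervalIntegrable a b)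
  exact ⟨n, by simp [him, hn]⟩

theorem eqOn_Icc_of_mapsTo_Ioo_isDiscrete {α β : Type*} [ConditionallyCompleteLinearOrder α]
    [TopologicalSpace α] [OrderTopology α] [DenselyOrdered α] [TopologicalSpace β] [T1Space β]
    {S : Set β} (hS : IsDiscrete S) {f : α → β} {a b : α} (hf : ContinuousOn f (Set.Icc a b))
    (hfS : Set.MapsTo f (Set.Ioo a b) S) :
    Set.EqOn f (fun _ ↦ f a) (Set.Icc a b) := by
  rcases eq_or_ne a b with rfl | hab
  · intro x hx
    rw [show x = a by simpa using hx]
  intro x hx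
  obtain ⟨c, hc⟩ := Set.nonempty_Ioo.2 ((hx.1.trans hx.2).lt_of_ne hab)
  have hIoo : Set.EqOn f (fun _ ↦ f c) (Set.Ioo a b) := fun y hy ↦
    isPreconnected_Ioo.constant_of_mapsTo hS (hf.mono Set.Ioo_subset_Icc_self) hfS hy hc
  have hIcc : ∀ y ∈ Set.Icc a b, f y = f c := fun y hy ↦
    ((hf y hy).mono Set.Ioo_subset_Icc_self).eq_const_of_mem_closure
      (by rwa [closure_Ioo hab]) hIoo
  exact (hIcc x hx).trans (hIcc a (Set.left_mem_Icc.2 (hx.1.trans hx.2))).symm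

theorem periodic_of_dense_eqOn {α β : Type*} [TopologicalSpace α] [Add α] [ContinuousAdd α]
    [TopologicalSpace β] [T2Space β] {f g : α → β} {S : Set α} {c : α} (hf : Continuous f)
    (hg : Function.Periodic g c) (hS : Dense S) (hSc : ∀ x ∈ S, x + c ∈ S)
    (hfg : Set.EqOn f g S) : Function.Periodic f c :=
  congrFun <| (hf.comp (continuous_add_const c)).ext_on hS hf fun x hx ↦ by
    rw [Function.comp_apply, hfg (hSc x hx), hg, hfg hx]

end RealAnalysis

section PeriodicInjective

variable {α β : Type*} [AddCommGroup α] [LinearOrder α] [IsOrderedAddMonoid α] [Archimedean α]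

theorem modEq_of_periodic_of_injOn_Ico {f : α → β} {p a : α} (hp : 0 < p)
    (hf : Function.Periodic f p) (hinj : Set.InjOn f (Set.Ico a (a + p))) {s t : α}
    (hst : f s = f t) : s ≡ t [PMOD p] := by
  have hmod : ∀ x, f (toIcoMod hp a x) = f x := fun x ↦ hf.sub_zsmul_eq _
  exact (toIcoMod_inj hp).1 <|
    hinj (toIcoMod_mem_Ico hp a s) (toIcoMod_mem_Ico hp a t) (by rw [hmod, hmod, hst])

theorem apply_ne_apply_add_of_periodic_of_injOn_Ico {f : α → β} {p a h : α}
    (hf : Function.Periodic f p) (hinj : Set.InjOn f (Set.Ico a (a + p)))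
    (hh : h ∈ Set.Ioo 0 p) (s : α) : f s ≠ f (s + h) := by
  intro hs
  have hp : 0 < p := hh.1.trans hh.2
  have hmod : h ≡ 0 [PMOD p] :=
    AddCommGroup.add_modEq_left.1 (modEq_of_periodic_of_injOn_Ico hp hf hinj hs).symm
  have hself {x : α} (hx : x ∈ Set.Ico 0 p) : toIcoMod hp 0 x = x :=
    (toIcoMod_eq_self hp).2 (by rwa [zero_add])
  have hzero : h = 0 := by
    rw [← hself (Set.Ioo_subset_Ico_self hh), hmod.toIcoMod_eq_toIcoMod hp,
      hself (Set.left_mem_Ico.2 hp)]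
  exact hh.1.ne' hzero

theorem dense_setOf_apply_ne_of_periodic_of_injOn_Ico {f : ℝ → β} {p a : ℝ} (hp : 0 < p)
    (hf : Function.Periodic f p) (hinj : Set.InjOn f (Set.Ico a (a + p))) (s : ℝ) :
    Dense {t | f s ≠ f t} := by
  refine ((Set.countable_range fun n : ℤ ↦ s + n • p).dense_compl ℝ).mono ?_
  intro t ht hst
  obtain ⟨n, hn⟩ :=
    AddCommGroup.modEq_iff_zsmul'.1 (modEq_of_periodic_of_injOn_Ico hp hf hinj hst)
  exact ht ⟨n, by simp only [← hn, add_sub_cancel]⟩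

end PeriodicInjective

section DoubleIntegrals

theorem integral_integral_swap_of_continuous {E : Type*} [NormedAddCommGroup E] [NormedSpace ℝ E]
    {f : ℝ → ℝ → E} (hf : Continuous f.uncurry) (a b c d : ℝ) :
    ∫ x in a..b, ∫ y in c..d, f x y = ∫ y in c..d, ∫ x in a..b, f x y :=
  intervalIntegral_intervalIntegral_swap <|
    (hf.continuousOn.integrableOn_compact (isCompact_uIcc.prod isCompact_uIcc)).mono_set
      (Set.prod_mono Set.uIoc_subset_uIcc Set.uIoc_subset_uIcc)

theorem integral_integral_shear_of_periodic {E : Type*} [NormedAddCommGroup E] [NormedSpace ℝ E]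
    {f : ℝ → ℝ → E} (hf : Continuous f.uncurry) {L : ℝ} (hper : ∀ s, Function.Periodic (f s) L)
    (a b : ℝ) :
    ∫ h in (0 : ℝ)..L, ∫ s in a..b, f s (s + h) = ∫ s in a..b, ∫ t in (0 : ℝ)..L, f s t := by
  rw [integral_integral_swap_of_continuous (f := fun h s ↦ f s (s + h)) (by fun_prop)]
  refine integral_congr fun s _ ↦ ?_
  rw [integral_comp_add_left (f s), add_zero, (hper s).intervalIntegral_add_eq s 0, zero_add]

theorem integral_integral_add_of_continuous {E : Type*} [NormedAddCommGroup E] [NormedSpace ℝ E]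
    {f g : ℝ → ℝ → E} (hf : Continuous f.uncurry) (hg : Continuous g.uncurry) (a b c d : ℝ) :
    ∫ s in a..b, ∫ t in c..d, (f s t + g s t) =
      (∫ s in a..b, ∫ t in c..d, f s t) + ∫ s in a..b, ∫ t in c..d, g s t := by
  have hinner (s : ℝ) : ∫ t in c..d, (f s t + g s t) =
      (∫ t in c..d, f s t) + ∫ t in c..d, g s t :=
    intervalIntegral.integral_add ((hf.uncurry_left s).intervalIntegrable c d)
      ((hg.uncurry_left s).intervalIntegrable c d)
  simp only [hinner]
  exact intervalIntegral.integral_add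
    ((continuous_parametric_intervalIntegral_of_continuous' hf c d).intervalIntegrable a b)
    ((continuous_parametric_intervalIntegral_of_continuous' hg c d).intervalIntegrable a b)

theorem integral_integral_add_const_sq {f : ℝ → ℝ → ℝ} (hf : Continuous f.uncurry)
    (a b c d r : ℝ) :
    ∫ s in a..b, ∫ t in c..d, (f s t + r) ^ 2 =
      (∫ s in a..b, ∫ t in c..d, f s t ^ 2) + 2 * r * (∫ s in a..b, ∫ t in c..d, f s t)
        + (b - a) * (d - c) * r ^ 2 := by
  have hsq (s t : ℝ) : (f s t + r) ^ 2 = f s t ^ 2 + 2 * r * f s t + r ^ 2 := by ring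
  simp only [hsq]
  rw [integral_integral_add_of_continuous (by fun_prop) (by fun_prop),
    integral_integral_add_of_continuous (by fun_prop) (by fun_prop)]
  simp only [intervalIntegral.integral_const_mul, intervalIntegral.integral_const, smul_eq_mul]
  ring

end DoubleIntegrals

section Kernel

variable {q : ℝ → EuclideanSpace ℝ (Fin 2)}

/-- The chord `q (s + h) - q s` of a plane curve as a complex number, so that the rotation of the
chord as `s` varies is the imaginary part of a logarithmic derivative. -/
noncomputable def chord (q : ℝ → EuclideanSpace ℝ (Fin 2)) (h s : ℝ) : ℂ :=
  Complex.orthonormalBasisOneI.repr.symm (q (s + h) - q s)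

theorem chord_ne_zero {h s : ℝ} : chord q h s ≠ 0 ↔ q s ≠ q (s + h) := by
  rw [chord, map_ne_zero_iff _ (LinearIsometryEquiv.injective _), sub_ne_zero, ne_comm]

theorem contDiff_chord {n : WithTop ℕ∞} (hq : ContDiff ℝ n q) (h : ℝ) :
    ContDiff ℝ n (chord q h) := by
  unfold chord
  fun_prop

theorem periodic_chord {L : ℝ} (hper : Function.Periodic q L) (h : ℝ) :
    Function.Periodic (chord q h) L := fun s ↦ by
  rw [chord, add_right_comm, hper, hper, chord]

theorem deriv_chord (hq : Differentiable ℝ q) (h s : ℝ) :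
    deriv (chord q h) s =
      Complex.orthonormalBasisOneI.repr.symm (deriv q (s + h) - deriv q s) := by
  have hsub : HasDerivAt (fun s ↦ q (s + h) - q s) (deriv q (s + h) - deriv q s) s :=
    ((hq (s + h)).hasDerivAt.comp_add_const s h).sub (hq s).hasDerivAt
  exact (Complex.orthonormalBasisOneI.repr.symm.toContinuousLinearEquiv.hasFDerivAt.comp_hasDerivAt
    s hsub).deriv

theorem dlKernel_add_dlKernel_swap (hq : Differentiable ℝ q) (h s : ℝ) :
    dlKernel q s (s + h) + dlKernel q (s + h) s = -(logDeriv (chord q h) s).im := by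
  rw [logDeriv_apply, deriv_chord hq, Complex.div_im, ← sub_div]
  have hnorm : Complex.normSq (chord q h s) = ‖q (s + h) - q s‖ ^ 2 := by
    rw [Complex.normSq_eq_norm_sq, chord, LinearIsometryEquiv.norm_map]
  rw [hnorm, dlKernel, dlKernel, norm_sub_rev (q s), ← add_div, ← neg_div]
  simp [chord, -neg_sub]
  ring

theorem periodic_dlKernel_right {L : ℝ} (hper : Function.Periodic q L) (s : ℝ) :
    Function.Periodic (dlKernel q s) L := fun t ↦ by
  have hderiv : deriv q (t + L) = deriv q t := by
    rw [← deriv_comp_add_const, funext hper]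
  rw [dlKernel, hper, hderiv, dlKernel]

theorem periodic_dlKernel_left {L : ℝ} (hper : Function.Periodic q L) (t : ℝ) :
    Function.Periodic (dlKernel q · t) L := fun s ↦ by
  simp only [dlKernel, hper s]

theorem integral_dlDiag (a b : ℝ) :
    ∫ t in a..b, dlDiag q t = -(1 / 2) * ∫ t in a..b,
      (deriv (deriv q) t 1 * deriv q t 0 - deriv (deriv q) t 0 * deriv q t 1) := by
  rw [← intervalIntegral.integral_const_mul]
  refine integral_congr fun t _ ↦ ?_
  rw [dlDiag]
  ring

end Kernel

section ContinuousExtension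

variable {L : ℝ} {q : ℝ → EuclideanSpace ℝ (Fin 2)} {k : ℝ → ℝ → ℝ}
  (hper : Function.Periodic q L) (hinj : Set.InjOn q (Set.Ico 0 L))
  (hoff : ∀ s t, q s ≠ q t → k s t = dlKernel q s t)

include hper hinj hoff

theorem integral_extension_add_swap_mem_zmultiples (hq : ContDiff ℝ 1 q) {h : ℝ}
    (hh : h ∈ Set.Ioo 0 L) :
    ∫ s in (0 : ℝ)..L, (k s (s + h) + k (s + h) s) ∈ AddSubgroup.zmultiples (2 * π) := by
  have hne (s : ℝ) : q s ≠ q (s + h) :=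
    apply_ne_apply_add_of_periodic_of_injOn_Ico hper (by rwa [zero_add]) hh s
  have hk (s : ℝ) : k s (s + h) + k (s + h) s = -(logDeriv (chord q h) s).im := by
    rw [hoff _ _ (hne s), hoff _ _ (hne s).symm, dlKernel_add_dlKernel_swap hq.differentiable_one]
  simp only [hk, intervalIntegral.integral_neg]
  exact neg_mem <| integral_im_logDeriv_mem_zmultiples (contDiff_chord hq h)
    (fun s ↦ chord_ne_zero.2 (hne s)) (by simpa using periodic_chord hper h 0)

variable (hcont : Continuous k.uncurry)

include hcont

theorem integral_extension_add_swap_eq_two_mul_diag (hq : ContDiff ℝ 1 q) {h : ℝ}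
    (hh : h ∈ Set.Icc 0 L) :
    ∫ s in (0 : ℝ)..L, (k s (s + h) + k (s + h) s) = 2 * ∫ s in (0 : ℝ)..L, k s s := by
  have hG : Continuous fun h ↦ ∫ s in (0 : ℝ)..L, (k s (s + h) + k (s + h) s) :=
    continuous_parametric_intervalIntegral_of_continuous' (by fun_prop) 0 L
  have hdiscrete : IsDiscrete (AddSubgroup.zmultiples (2 * π) : Set ℝ) :=
    SetLike.isDiscrete_iff_discreteTopology.2 inferInstance
  refine (eqOn_Icc_of_mapsTo_Ioo_isDiscrete hdiscrete hG.continuousOn (fun _ ↦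
    integral_extension_add_swap_mem_zmultiples hper hinj hoff hq) hh).trans ?_
  simp only [add_zero, ← two_mul, intervalIntegral.integral_const_mul]

variable (hL : 0 < L)

include hL

theorem periodic_extension_add_swap (s : ℝ) : Function.Periodic (fun t ↦ k s t + k t s) L := by
  have hdense : Dense {t | q s ≠ q t} :=
    dense_setOf_apply_ne_of_periodic_of_injOn_Ico hL hper (by rwa [zero_add]) s
  refine periodic_of_dense_eqOn (g := fun t ↦ dlKernel q s t + dlKernel q t s) (by fun_prop)
    ((periodic_dlKernel_right hper s).add (periodic_dlKernel_left hper s)) hdense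
    (fun t ht ↦ ?_) fun t ht ↦ ?_
  · rwa [Set.mem_ofPred_eq, hper]
  · simp only [hoff s t ht, hoff t s ht.symm]

theorem integral_integral_extension_eq_mul_diag (hq : ContDiff ℝ 1 q) :
    ∫ s in (0 : ℝ)..L, ∫ t in (0 : ℝ)..L, k s t = L * ∫ t in (0 : ℝ)..L, k t t := by
  have hswap : Continuous (Function.uncurry fun s t ↦ k t s) := by fun_prop
  have hsym : ∫ s in (0 : ℝ)..L, ∫ t in (0 : ℝ)..L, (k s t + k t s) =
      2 * ∫ s in (0 : ℝ)..L, ∫ t in (0 : ℝ)..L, k s t := by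
    rw [integral_integral_add_of_continuous hcont hswap,
      integral_integral_swap_of_continuous hswap, two_mul]
  have hshear : ∫ s in (0 : ℝ)..L, ∫ t in (0 : ℝ)..L, (k s t + k t s) =
      L * (2 * ∫ t in (0 : ℝ)..L, k t t) := by
    rw [← integral_integral_shear_of_periodic (by fun_prop)
      (periodic_extension_add_swap hper hinj hoff hcont hL),
      integral_congr fun h hh ↦ integral_extension_add_swap_eq_two_mul_diag hper hinj hoff hcont hq
        (by rwa [Set.uIcc_of_le hL.le] at hh),
      intervalIntegral.integral_const, sub_zero, smul_eq_mul]
  linarith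

end ContinuousExtension

/-- For a regular `C²` curve `k t t = -κ(t) ‖q' t‖ / 2`, where `κ` is the signed curvature, so
`horient` says that the total curvature is `2π`, that is, that `q` is positively oriented. -/
theorem double_layer_trace_decomposition_general {L : ℝ} (hL : 0 < L)
    {q : ℝ → EuclideanSpace ℝ (Fin 2)} (hq : ContDiff ℝ 1 q) (hper : Function.Periodic q L)
    (hinj : Set.InjOn q (Set.Ico 0 L)) {k : ℝ → ℝ → ℝ}
    (hoff : ∀ s t, q s ≠ q t → k s t = dlKernel q s t) (hcont : Continuous k.uncurry)
    (horient : ∫ t in (0 : ℝ)..L, k t t = -π) :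
    ((1 / π ^ 2) * ∫ s in (0 : ℝ)..L, ∫ t in (0 : ℝ)..L, k s t ^ 2)
      = 1 + (1 / π ^ 2) * ∫ s in (0 : ℝ)..L, ∫ t in (0 : ℝ)..L, (k s t + π / L) ^ 2 := by
  rw [integral_integral_add_const_sq hcont,
    integral_integral_extension_eq_mul_diag hper hinj hoff hcont hL hq, horient]
  field_simp
  ring

/-- The trace of `K*K` decomposes as
`(1/π²)∫₀^L∫₀^L k̃(s,t)² dt ds = 1 + (1/π²)∫₀^L∫₀^L (k̃(s,t) + π/L)² dt ds`. -/
theorem double_layer_trace_decomposition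
    (L : ℝ) (hL : 0 < L)
    (q : ℝ → EuclideanSpace ℝ (Fin 2))
    (hq : ContDiff ℝ 2 q)
    (hper : ∀ s, q (s + L) = q s)
    (hunit : ∀ s, ‖deriv q s‖ = 1)
    (hinj : Set.InjOn q (Set.Ico 0 L))
    (horient : (∫ t in (0:ℝ)..L,
      (deriv (deriv q) t 1 * deriv q t 0 - deriv (deriv q) t 0 * deriv q t 1)) = 2 * π)
    (ktil : ℝ → ℝ → ℝ)
    (hcont : Continuous (fun p : ℝ × ℝ => ktil p.1 p.2))
    (hoff : ∀ s t, q s ≠ q t → ktil s t = dlKernel q s t)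
    (hdiag : ∀ t, ktil t t = dlDiag q t) :
    ((1 / π ^ 2) * ∫ s in (0:ℝ)..L, ∫ t in (0:ℝ)..L, (ktil s t) ^ 2)
      = 1 + (1 / π ^ 2) * ∫ s in (0:ℝ)..L, ∫ t in (0:ℝ)..L, (ktil s t + π / L) ^ 2 := by
  refine double_layer_trace_decomposition_general hL (hq.of_le one_le_two) hper hinj hoff hcont ?_
  rw [funext hdiag, integral_dlDiag, horient]
  ring
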